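/- arXiv:1309.7664 — 2 statements merged into one kernel-verified Lean document; each statement's English description precedes it below -/
import Mathlib

section
/- Let A ∈ ℂ^{m×l} and B ∈ ℂ^{l×m}. If there exists an index k₀ ∈ {1,…,m} such that ‖B_{·k₀}‖_{ℓq} < max_{1≤k≤m} ‖B_{·k}‖_{ℓq} and the row A_{k₀·} ≠ 0, then the inequality is strict: |trace(AB)| < (max_{1≤k≤m} ‖B_{·k}‖_{ℓq}) · J_{p,1}(A). -/
/-!
By Hölder's inequality each diagonal entry satisfies
`|(AB)_{kk}| ≤ ‖A_{k·}‖_p ‖B_{·k}‖_q ≤ (max_j ‖B_{·j}‖_q) ‖A_{k·}‖_p`, and for `k = k₀` the second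
step is strict because `‖A_{k₀·}‖_p > 0`. Summing over `k` gives the strict bound for the trace.
-/

open Finset ENNReal

/-- The vector ℓp norm on `ℂ^n` for an extended-real exponent `p ∈ [1,∞]`,
via the `PiLp` norm. -/
noncomputable def lpnorm (p : ℝ≥0∞) {n : ℕ} (v : Fin n → ℂ) : ℝ :=
  ‖(WithLp.equiv p (Fin n → ℂ)).symm v‖

/-- The `J_{p,1}` norm of a matrix: sum of the ℓp norms of its rows. -/
noncomputable def Jp1 (p : ℝ≥0∞) {m l : ℕ} (A : Matrix (Fin m) (Fin l) ℂ) : ℝ :=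
  ∑ i, lpnorm p (A i)

section

open WithLp

section Holder

variable {ι : Type*} [Fintype ι] {E F : ι → Type*} [∀ i, SeminormedAddCommGroup (E i)]
  [∀ i, SeminormedAddCommGroup (F i)]

lemma norm_toLp_norm (p : ℝ≥0∞) (a : ∀ i, E i) :
    ‖toLp p (fun i => ‖a i‖)‖ = ‖toLp p a‖ := by
  rcases p.trichotomy with rfl | rfl | hp
  · simp [PiLp.norm_eq_card]
  · simp [PiLp.norm_eq_ciSup]
  · simp [PiLp.norm_eq_sum hp]

lemma sum_norm_mul_norm_le_norm_toLp_mul_norm_toLp (p q : ℝ≥0∞) [p.HolderConjugate q]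
    (a : ∀ i, E i) (b : ∀ i, F i) :
    ∑ i, ‖a i‖ * ‖b i‖ ≤ ‖toLp p a‖ * ‖toLp q b‖ := by
  have : Fact (1 ≤ p) := ⟨HolderConjugate.one_le p q⟩
  have : Fact (1 ≤ q) := ⟨HolderConjugate.one_le q p⟩
  let f : lp (fun _ : ι => ℝ) p := Equiv.lpPiLp.symm (toLp p fun i => ‖a i‖)
  let g : lp (fun _ : ι => ℝ) q := Equiv.lpPiLp.symm (toLp q fun i => ‖b i‖)
  have hf : ‖f‖ = ‖toLp p a‖ := (equiv_lpPiLp_norm f).symm.trans (norm_toLp_norm p a)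
  have hg : ‖g‖ = ‖toLp q b‖ := (equiv_lpPiLp_norm g).symm.trans (norm_toLp_norm q b)
  -- Unlike `Real.inner_le_Lp_mul_Lq`, this pairing covers the exponents `1` and `∞` too.
  let pairing := lp.dualPairing p q (fun _ : ι => ContinuousLinearMap.mul ℝ ℝ) (K := 1)
    fun _ => ContinuousLinearMap.opNorm_mul_le ℝ ℝ
  have hpairing : ‖pairing‖ ≤ 1 := lp.norm_dualPairing _ _
  calc ∑ i, ‖a i‖ * ‖b i‖
    _ = ∑' i, ‖a i‖ * ‖b i‖ := (tsum_fintype _).symm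
    _ = pairing f g := rfl
    _ ≤ ‖pairing f g‖ := Real.le_norm_self _
    _ ≤ 1 * ‖f‖ * ‖g‖ := pairing.le_of_opNorm₂_le_of_le hpairing le_rfl le_rfl
    _ = ‖toLp p a‖ * ‖toLp q b‖ := by rw [one_mul, hf, hg]

end Holder

lemma norm_mul_apply_le_norm_row_mul_norm_col {m l n R : Type*} [Fintype l]
    [NonUnitalSeminormedRing R] (p q : ℝ≥0∞) [p.HolderConjugate q]
    (A : Matrix m l R) (B : Matrix l n R) (i : m) (k : n) :
    ‖(A * B) i k‖ ≤ ‖toLp p (A.row i)‖ * ‖toLp q (B.col k)‖ :=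
  calc ‖(A * B) i k‖
    _ ≤ ∑ j, ‖A i j‖ * ‖B j k‖ := norm_sum_le_of_le _ fun _ _ => norm_mul_le _ _
    _ ≤ ‖toLp p (A.row i)‖ * ‖toLp q (B.col k)‖ :=
      sum_norm_mul_norm_le_norm_toLp_mul_norm_toLp p q (A.row i) (B.col k)

theorem trace_lt_max_colnorm_mul_Jp1_general {m l R : Type*} [Fintype m] [Fintype l]
    [NonUnitalNormedRing R] {p q : ℝ≥0∞} [p.HolderConjugate q]
    (A : Matrix m l R) (B : Matrix l m R) {k₀ : m}
    (hcol : ‖toLp q (B.col k₀)‖ < ⨆ k, ‖toLp q (B.col k)‖) (hrow : A.row k₀ ≠ 0) :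
    ‖(A * B).trace‖ < (⨆ k, ‖toLp q (B.col k)‖) * ∑ i, ‖toLp p (A.row i)‖ := by
  have : Fact (1 ≤ p) := ⟨HolderConjugate.one_le p q⟩
  set M := ⨆ k, ‖toLp q (B.col k)‖
  have hM (k : m) : ‖toLp q (B.col k)‖ ≤ M :=
    le_ciSup (f := fun k => ‖toLp q (B.col k)‖) (Set.finite_range _).bddAbove k
  have hrow_pos : 0 < ‖toLp p (A.row k₀)‖ := norm_pos_iff.2 ((toLp_eq_zero p).not.2 hrow)
  calc ‖(A * B).trace‖
    _ ≤ ∑ k, ‖(A * B) k k‖ := norm_sum_le _ _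
    _ ≤ ∑ k, ‖toLp p (A.row k)‖ * ‖toLp q (B.col k)‖ :=
      sum_le_sum fun k _ => norm_mul_apply_le_norm_row_mul_norm_col p q A B k k
    _ < ∑ k, ‖toLp p (A.row k)‖ * M :=
      sum_lt_sum (fun k _ => mul_le_mul_of_nonneg_left (hM k) (norm_nonneg _))
        ⟨k₀, mem_univ _, mul_lt_mul_of_pos_left hcol hrow_pos⟩
    _ = M * ∑ k, ‖toLp p (A.row k)‖ := by rw [← sum_mul, mul_comm]

end

/-- For `1 ≤ p ≤ ∞` with conjugate exponent `q`, and any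
`A ∈ ℂ^{m×l}`, `B ∈ ℂ^{l×m}`: if some index `k₀` has column `B_{·k₀}` of
ℓq-norm strictly below the maximum while the row `A_{k₀·}` is nonzero, then
`|trace(AB)| < (max_k ‖B_{·k}‖_{ℓq}) · J_{p,1}(A)`. -/
theorem trace_lt_max_colnorm_mul_Jp1
    (m l : ℕ) (p q : ℝ≥0∞) (hp : 1 ≤ p) (hpq : 1 / p + 1 / q = 1)
    (A : Matrix (Fin m) (Fin l) ℂ) (B : Matrix (Fin l) (Fin m) ℂ)
    (k₀ : Fin m)
    (hcol : lpnorm q (fun i => B i k₀) < ⨆ k : Fin m, lpnorm q (fun i => B i k))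
    (hrow : A k₀ ≠ 0) :
    ‖Matrix.trace (A * B)‖ <
      (⨆ k : Fin m, lpnorm q (fun i => B i k)) * Jp1 p A := by
  have : p.HolderConjugate q := holderConjugate_iff.2 (by simpa only [one_div] using hpq)
  exact trace_lt_max_colnorm_mul_Jp1_general A B hcol hrow
end

section
/- Let Φ ∈ ℂ^{N×m} have linearly independent columns, B ∈ ℂ^{N×ν}, λ > 0, X₀ = (Φ*Φ)^{−1}Φ*B, and let X⋆ be the unique minimizer of L(X) = (1/2)‖B − ΦX‖_F² + λ J_{2,1}(X) over ℂ^{m×ν}. Then every row of X₀ − X⋆ has ℓ2-norm at most λ · ‖(Φ*Φ)^{−1}‖_{∞→∞}, where ‖M‖_{∞→∞} = max_i Σ_k |M_{ik}| is the induced ℓ∞-to-ℓ∞ operator norm. -/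
open Finset

/-- The `J_{2,1}` norm of a matrix: sum of the ℓ2 norms of its rows. -/
noncomputable def J21 {m ν : ℕ} (X : Matrix (Fin m) (Fin ν) ℂ) : ℝ :=
  ∑ i, Real.sqrt (∑ t, ‖X i t‖ ^ 2)

/-- The Frobenius norm of a complex matrix. -/
noncomputable def frob {m n : ℕ} (X : Matrix (Fin m) (Fin n) ℂ) : ℝ :=
  Real.sqrt (∑ i, ∑ t, ‖X i t‖ ^ 2)

/-!
Write `G = Φᴴ (B - Φ X)` for the correlation of the residual with the columns of `Φ`. If `X`
minimizes the Lagrangian, then the one-sided derivative of the objective at `X` in every direction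
`Z` is nonnegative, so `re tr(Gᴴ Z) ≤ λ J₂₁(Z)`. Taking for `Z` the matrix whose only nonzero row
is the `k`-th one, equal to the `k`-th row `G_k` of `G`, gives `‖G_k‖² ≤ λ ‖G_k‖`, so every row of
`G` has norm at most `λ`. As `ΦᴴΦ` is invertible, the least-squares solution `X₀` satisfies
`X₀ - X = (ΦᴴΦ)⁻¹ G`, and the triangle inequality bounds the rows.
-/

open Matrix WithLp
open RCLike (re)
open scoped InnerProductSpace

section LeastSquares

variable {𝕜 n m : Type*} [RCLike 𝕜] [Fintype n] [Fintype m] [DecidableEq m]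

open scoped ComplexOrder in
theorem isUnit_det_conjTranspose_mul_self {Φ : Matrix n m 𝕜} (hΦ : LinearIndependent 𝕜 Φ.col) :
    IsUnit (Φᴴ * Φ).det :=
  (isUnit_iff_isUnit_det _).1 (PosDef.conjTranspose_mul_self Φ (mulVec_injective_iff.2 hΦ)).isUnit

theorem leastSquares_sub_eq {ν : Type*} {Φ : Matrix n m 𝕜} (hΦ : LinearIndependent 𝕜 Φ.col)
    (B : Matrix n ν 𝕜) (X : Matrix m ν 𝕜) :
    (Φᴴ * Φ)⁻¹ * (Φᴴ * B) - X = (Φᴴ * Φ)⁻¹ * (Φᴴ * (B - Φ * X)) := by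
  rw [Matrix.mul_sub, Matrix.mul_sub, ← Matrix.mul_assoc Φᴴ Φ X,
    nonsing_inv_mul_cancel_left _ _ (isUnit_det_conjTranspose_mul_self hΦ)]

end LeastSquares

section RegularizedLeastSquares

variable {𝕜 E H : Type*} [RCLike 𝕜] [AddCommGroup E] [Module 𝕜 E]
  [SeminormedAddCommGroup H] [InnerProductSpace 𝕜 H]

theorem norm_sub_ofReal_smul_sq (r w : H) (ε : ℝ) :
    ‖r - (ε : 𝕜) • w‖ ^ 2 = ‖r‖ ^ 2 - 2 * ε * re ⟪r, w⟫_𝕜 + ε ^ 2 * ‖w‖ ^ 2 := by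
  rw [norm_sub_sq (𝕜 := 𝕜), inner_smul_right, RCLike.re_ofReal_mul, norm_smul, mul_pow,
    RCLike.norm_ofReal, sq_abs]
  ring

theorem re_inner_residual_le_of_forall_le {A : E →ₗ[𝕜] H} {b : H} {p : Seminorm 𝕜 E} {c : ℝ}
    (hc : 0 ≤ c) {x : E}
    (hx : ∀ y, 1 / 2 * ‖b - A x‖ ^ 2 + c * p x ≤ 1 / 2 * ‖b - A y‖ ^ 2 + c * p y) (z : E) :
    re ⟪b - A x, A z⟫_𝕜 ≤ c * p z := by
  have perturbed : ∀ ε : ℝ, 0 < ε →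
      re ⟪b - A x, A z⟫_𝕜 ≤ c * p z + ε * (1 / 2 * ‖A z‖ ^ 2) := by
    intro ε hε
    have residual : b - A (x + (ε : 𝕜) • z) = (b - A x) - (ε : 𝕜) • A z := by
      rw [map_add, map_smul, sub_add_eq_sub_sub]
    have penalty : c * p (x + (ε : 𝕜) • z) ≤ c * (p x + ε * p z) := by
      have h := map_add_le_add p x ((ε : 𝕜) • z)
      rw [map_smul_eq_mul, RCLike.norm_of_nonneg hε.le] at h
      exact mul_le_mul_of_nonneg_left h hc
    have hmin := hx (x + (ε : 𝕜) • z)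
    rw [residual, norm_sub_ofReal_smul_sq] at hmin
    refine le_of_mul_le_mul_left ?_ hε
    linarith
  have limit : Filter.Tendsto (fun ε : ℝ ↦ c * p z + ε * (1 / 2 * ‖A z‖ ^ 2))
      (nhdsWithin 0 (Set.Ioi 0)) (nhds (c * p z)) :=
    tendsto_nhdsWithin_of_tendsto_nhds (Continuous.tendsto' (by fun_prop) _ _ (by simp))
  exact ge_of_tendsto limit (eventually_nhdsWithin_of_forall perturbed)

end RegularizedLeastSquares

section RowSparseRegression

open scoped Matrix.Norms.Frobenius

variable {𝕜 n m ν : Type*} [RCLike 𝕜] [Fintype n] [Fintype m] [Fintype ν]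

theorem frobenius_norm_eq_sqrt (A : Matrix n ν 𝕜) : ‖A‖ = √(∑ i, ∑ t, ‖A i t‖ ^ 2) := by
  simp only [frobenius_norm_def, Real.sqrt_eq_rpow, Real.rpow_two]

theorem norm_toLp_vec (A : Matrix n ν 𝕜) : ‖toLp 2 (vec A)‖ = ‖A‖ := by
  rw [EuclideanSpace.norm_eq, frobenius_norm_eq_sqrt, Fintype.sum_prod_type, sum_comm]
  rfl

theorem inner_toLp_vec (A C : Matrix n ν 𝕜) :
    ⟪toLp 2 (vec A), toLp 2 (vec C)⟫_𝕜 = (Aᴴ * C).trace := by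
  rw [EuclideanSpace.inner_toLp_toLp, dotProduct_comm, star_vec_dotProduct_vec]

variable (𝕜 m ν) in
/-- The `ℓ_{2,1}` (row-sparsity) norm `J_{2,1}`, bundled as a seminorm on matrices. -/
noncomputable def rowNormSum : Seminorm 𝕜 (Matrix m ν 𝕜) :=
  Seminorm.of (fun X ↦ ∑ i, ‖toLp 2 (X i)‖)
    (fun X Y ↦ by
      rw [← sum_add_distrib]
      exact sum_le_sum fun i _ ↦ norm_add_le (toLp 2 (X i)) (toLp 2 (Y i)))
    (fun a X ↦ by
      rw [mul_sum]
      exact sum_congr rfl fun i _ ↦ norm_smul a (toLp 2 (X i)))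

theorem rowNormSum_apply (X : Matrix m ν 𝕜) : rowNormSum 𝕜 m ν X = ∑ i, ‖toLp 2 (X i)‖ := rfl

theorem norm_row_mul_le {l : Type*} {G : Matrix m ν 𝕜} {c : ℝ} (hG : ∀ k, ‖toLp 2 (G k)‖ ≤ c)
    (M : Matrix l m 𝕜) (i : l) : ‖toLp 2 ((M * G) i)‖ ≤ c * ∑ k, ‖M i k‖ := by
  have row : toLp 2 ((M * G) i) = ∑ k, M i k • toLp 2 (G k) := by
    ext t
    simp [mul_apply]
  rw [row, mul_comm, sum_mul]
  refine norm_sum_le_of_le _ fun k _ ↦ ?_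
  rw [norm_smul]
  exact mul_le_mul_of_nonneg_left (hG k) (norm_nonneg _)

theorem rowNormSum_vecMulVec (w : m → 𝕜) (v : ν → 𝕜) :
    rowNormSum 𝕜 m ν (vecMulVec w v) = (∑ i, ‖w i‖) * ‖toLp 2 v‖ := by
  rw [rowNormSum_apply, sum_mul]
  exact sum_congr rfl fun i _ ↦ norm_smul (w i) (toLp 2 v)

theorem trace_conjTranspose_mul_vecMulVec_single [DecidableEq m] (G : Matrix m ν 𝕜) (k : m)
    (v : ν → 𝕜) :
    (Gᴴ * vecMulVec (Pi.single k 1) v).trace = ⟪toLp 2 (G k), toLp 2 v⟫_𝕜 := by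
  rw [mul_vecMulVec, trace_vecMulVec, mulVec_single_one, EuclideanSpace.inner_toLp_toLp,
    dotProduct_comm]
  rfl

theorem norm_row_le_of_forall_re_trace_le {G : Matrix m ν 𝕜} {c : ℝ} (hc : 0 ≤ c)
    (hG : ∀ Z, re (Gᴴ * Z).trace ≤ c * rowNormSum 𝕜 m ν Z) (k : m) :
    ‖toLp 2 (G k)‖ ≤ c := by
  classical
  have sq_le : ‖toLp 2 (G k)‖ * ‖toLp 2 (G k)‖ ≤ c * ‖toLp 2 (G k)‖ := by
    have single_norm : ∑ i, ‖(Pi.single k 1 : m → 𝕜) i‖ = 1 := by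
      simp [Pi.single_apply, apply_ite norm]
    have h := hG (vecMulVec (Pi.single k 1) (G k))
    rwa [trace_conjTranspose_mul_vecMulVec_single, inner_self_eq_norm_mul_norm,
      rowNormSum_vecMulVec, single_norm, one_mul] at h
  rcases (norm_nonneg (toLp 2 (G k))).eq_or_lt with hg | hg
  · exact hg ▸ hc
  · exact le_of_mul_le_mul_right sq_le hg

/-- The Lagrangian `L(X) = ½‖B - ΦX‖_F² + λ J_{2,1}(X)` of row-sparse regression. -/
noncomputable def rowSparseLagrangian (Φ : Matrix n m 𝕜) (B : Matrix n ν 𝕜) (lam : ℝ)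
    (X : Matrix m ν 𝕜) : ℝ :=
  1 / 2 * ‖B - Φ * X‖ ^ 2 + lam * rowNormSum 𝕜 m ν X

theorem re_trace_correlation_le {Φ : Matrix n m 𝕜} {B : Matrix n ν 𝕜} {lam : ℝ}
    (hlam : 0 ≤ lam) {X : Matrix m ν 𝕜}
    (hX : ∀ Y, rowSparseLagrangian Φ B lam X ≤ rowSparseLagrangian Φ B lam Y)
    (Z : Matrix m ν 𝕜) :
    re ((Φᴴ * (B - Φ * X))ᴴ * Z).trace ≤ lam * rowNormSum 𝕜 m ν Z := by
  let A : Matrix m ν 𝕜 →ₗ[𝕜] EuclideanSpace 𝕜 (ν × n) :=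
    { toFun := fun Y ↦ toLp 2 (vec (Φ * Y))
      map_add' := fun Y Y' ↦ by rw [Matrix.mul_add, vec_add, toLp_add]
      map_smul' := fun a Y ↦ by rw [Matrix.mul_smul, vec_smul, toLp_smul, RingHom.id_apply] }
  have residual (Y : Matrix m ν 𝕜) : toLp 2 (vec B) - A Y = toLp 2 (vec (B - Φ * Y)) := by
    rw [vec_sub, toLp_sub]; rfl
  have optimality := re_inner_residual_le_of_forall_le (A := A) (b := toLp 2 (vec B))
    (p := rowNormSum 𝕜 m ν) hlam (x := X) (fun Y ↦ by
      simpa only [residual, norm_toLp_vec, rowSparseLagrangian] using hX Y) Z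
  have adjoint : (Φᴴ * (B - Φ * X))ᴴ * Z = (B - Φ * X)ᴴ * (Φ * Z) := by
    rw [conjTranspose_mul, conjTranspose_conjTranspose, Matrix.mul_assoc]
  rwa [residual, show A Z = toLp 2 (vec (Φ * Z)) from rfl, inner_toLp_vec, ← adjoint] at optimality

theorem norm_row_correlation_le {Φ : Matrix n m 𝕜} {B : Matrix n ν 𝕜} {lam : ℝ}
    (hlam : 0 ≤ lam) {X : Matrix m ν 𝕜}
    (hX : ∀ Y, rowSparseLagrangian Φ B lam X ≤ rowSparseLagrangian Φ B lam Y) (k : m) :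
    ‖toLp 2 ((Φᴴ * (B - Φ * X)) k)‖ ≤ lam :=
  norm_row_le_of_forall_re_trace_le hlam (re_trace_correlation_le hlam hX) k

theorem lagrangian_minimizer_row_bound_general [DecidableEq m] {Φ : Matrix n m 𝕜}
    (hΦ : LinearIndependent 𝕜 Φ.col) {B : Matrix n ν 𝕜} {lam : ℝ} (hlam : 0 ≤ lam)
    {X : Matrix m ν 𝕜}
    (hX : ∀ Y, rowSparseLagrangian Φ B lam X ≤ rowSparseLagrangian Φ B lam Y) (i : m) :
    ‖toLp 2 (((Φᴴ * Φ)⁻¹ * (Φᴴ * B) - X) i)‖ ≤ lam * ∑ k, ‖(Φᴴ * Φ)⁻¹ i k‖ := by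
  rw [leastSquares_sub_eq hΦ]
  exact norm_row_mul_le (norm_row_correlation_le hlam hX) _ i

end RowSparseRegression

theorem rowSparseLagrangian_eq_frob_J21 {N m ν : ℕ} (Φ : Matrix (Fin N) (Fin m) ℂ)
    (B : Matrix (Fin N) (Fin ν) ℂ) (lam : ℝ) (X : Matrix (Fin m) (Fin ν) ℂ) :
    rowSparseLagrangian Φ B lam X = 1 / 2 * frob (B - Φ * X) ^ 2 + lam * J21 X := by
  simp only [rowSparseLagrangian, frobenius_norm_eq_sqrt, rowNormSum_apply,
    EuclideanSpace.norm_eq, frob, J21]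

/-- With `Φ` of linearly independent columns, `λ > 0`,
`X₀ = (Φ*Φ)⁻¹Φ*B`, and `X⋆` the (unique) minimizer of
`L(X) = ½‖B − ΦX‖_F² + λ J_{2,1}(X)`, every row of `X₀ − X⋆` has ℓ2-norm at most
`λ ‖(Φ*Φ)⁻¹‖_{∞→∞}`, where `‖M‖_{∞→∞} = max_i Σ_k |M_{ik}|`. -/
theorem lagrangian_minimizer_row_bound
    (N m ν : ℕ) (hN : 0 < N) (hm : 0 < m) (hν : 0 < ν)
    (Φ : Matrix (Fin N) (Fin m) ℂ)
    (hind : LinearIndependent ℂ (fun j : Fin m => fun i => Φ i j))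
    (B : Matrix (Fin N) (Fin ν) ℂ) (lam : ℝ) (hlam : 0 < lam)
    (X₀ : Matrix (Fin m) (Fin ν) ℂ)
    (hX₀ : X₀ = (Φ.conjTranspose * Φ)⁻¹ * (Φ.conjTranspose * B))
    (L : Matrix (Fin m) (Fin ν) ℂ → ℝ)
    (hL : ∀ X, L X = (1 / 2) * (frob (B - Φ * X)) ^ 2 + lam * J21 X)
    (Xstar : Matrix (Fin m) (Fin ν) ℂ)
    (hmin : ∀ Y, L Xstar ≤ L Y)
    (huniq : ∀ Y, (∀ Z, L Y ≤ L Z) → Y = Xstar) :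
    ∀ i : Fin m,
      Real.sqrt (∑ t, ‖X₀ i t - Xstar i t‖ ^ 2) ≤
        lam * ⨆ i' : Fin m, ∑ k, ‖((Φ.conjTranspose * Φ)⁻¹) i' k‖ := by
  intro i
  obtain rfl : L = rowSparseLagrangian Φ B lam :=
    funext fun X ↦ (hL X).trans (rowSparseLagrangian_eq_frob_J21 Φ B lam X).symm
  have hrow := lagrangian_minimizer_row_bound_general hind hlam.le hmin i
  rw [← hX₀, EuclideanSpace.norm_eq] at hrow
  refine hrow.trans (mul_le_mul_of_nonneg_left ?_ hlam.le)
  exact le_ciSup (f := fun i' ↦ ∑ k, ‖(Φᴴ * Φ)⁻¹ i' k‖) (Set.finite_range _).bddAbove i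
end
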